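/- Let n ≥ 2 and m = n − 2, and let f : ℂ × ℂ → ℂ be analytic on an open neighborhood of (0,0). For (x, a) = (x, a_0, …, a_m) near 0 in ℂ × ℂ^{m+1} define g(x, a) := f(x, Σ_{i=0}^m a_i x^i), and for each i ≥ 0 define k_i(a) := −(1/i!) · (∂^i g/∂x^i)(0, a), a holomorphic function of a on a neighborhood of 0 in ℂ^{m+1}. Then there exist an open neighborhood U of 0 in ℂ^{m+1} and a holomorphic function W : U → ℂ such that ∂W/∂a_i = k_{n−1−i} on U for all 0 ≤ i ≤ m. -/

import Mathlib

/-!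
The `1`-form `∑ᵢ k_{n-1-i} daᵢ` is minus the coefficient of `x^{n-1}` in the family of `1`-forms
`f(x, S_x(a)) dS_x`, where `S_x(a) = ∑ₗ aₗ xˡ`. For each fixed `x` this is the pullback of the form
`f(x, y) dy` on the line, hence closed; since the derivative in `a` commutes with the iterated
derivative in `x`, the coefficient is closed too, and the Poincaré lemma on a ball provides `W`.
-/

open Filter Topology
open scoped Nat

section Coefficients

variable {𝕜 F G : Type*} [NontriviallyNormedField 𝕜] [NormedAddCommGroup F] [NormedSpace 𝕜 F]
  [NormedAddCommGroup G] [NormedSpace 𝕜 G]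

lemma iteratedDeriv_clm_comp (T : F →L[𝕜] G) {h : 𝕜 → F} {x : 𝕜} {k : ℕ}
    (hh : ContDiffAt 𝕜 k h x) :
    iteratedDeriv k (fun y => T (h y)) x = T (iteratedDeriv k h x) := by
  simp only [iteratedDeriv_eq_iteratedFDeriv]
  exact congr($(T.iteratedFDeriv_comp_left hh le_rfl) _)

lemma iteratedDeriv_clm_apply_const {h : 𝕜 → F →L[𝕜] G} {x : 𝕜} {k : ℕ}
    (hh : ContDiffAt 𝕜 k h x) (v : F) :
    iteratedDeriv k h x v = iteratedDeriv k (fun y => h y v) x :=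
  (iteratedDeriv_clm_comp (.apply 𝕜 G v) hh).symm

lemma iteratedDeriv_pow_smul_zero {h : 𝕜 → F} {k i : ℕ} (hik : i ≤ k)
    (hh : ContDiffAt 𝕜 k h 0) :
    iteratedDeriv k (fun x => x ^ i • h x) 0 =
      k.descFactorial i • iteratedDeriv (k - i) h 0 := by
  have leibniz : iteratedDeriv k (fun x => x ^ i • h x) 0 = ∑ j ∈ Finset.range (k + 1),
      k.choose j • iteratedDeriv j (· ^ i) (0 : 𝕜) • iteratedDeriv (k - j) h 0 := by
    simp only [← iteratedDerivWithin_univ]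
    exact iteratedDerivWithin_smul (Set.mem_univ 0) uniqueDiffOn_univ (by fun_prop)
      hh.contDiffWithinAt
  rw [leibniz, Finset.sum_eq_single_of_mem i (Finset.mem_range.2 (by lia))
    fun j _ hji => by
      simp only [iteratedDeriv_fun_pow_zero, if_neg hji, Nat.cast_zero, zero_smul, smul_zero]]
  rw [iteratedDeriv_fun_pow_zero, if_pos rfl, Nat.cast_smul_eq_nsmul, smul_smul,
    Nat.descFactorial_eq_factorial_mul_choose, mul_comm]

lemma taylorCoeff_pow_smul_zero [CharZero 𝕜] {h : 𝕜 → F} {k i : ℕ} (hik : i ≤ k)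
    (hh : ContDiffAt 𝕜 k h 0) :
    (1 / (k ! : 𝕜)) • iteratedDeriv k (fun x => x ^ i • h x) 0 =
      (1 / ((k - i)! : 𝕜)) • iteratedDeriv (k - i) h 0 := by
  have factorial_eq : ((k - i)! : 𝕜) * k.descFactorial i = k ! :=
    mod_cast Nat.factorial_mul_descFactorial hik
  have factorial_ne_zero : (k ! : 𝕜) ≠ 0 := mod_cast k.factorial_ne_zero
  rw [← factorial_eq] at factorial_ne_zero
  rw [iteratedDeriv_pow_smul_zero hik hh, ← Nat.cast_smul_eq_nsmul 𝕜, smul_smul, ← factorial_eq]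
  congr 1
  field_simp [left_ne_zero_of_mul factorial_ne_zero, right_ne_zero_of_mul factorial_ne_zero]

end Coefficients

section Slices

variable {𝕜 E F : Type*} [NontriviallyNormedField 𝕜] [NormedAddCommGroup E] [NormedSpace 𝕜 E]
  [NormedAddCommGroup F] [NormedSpace 𝕜 F] {h : 𝕜 × E → F} {x : 𝕜} {a : E}

lemma deriv_prodMk_left (hh : DifferentiableAt 𝕜 h (x, a)) :
    deriv (fun y => h (y, a)) x = fderiv 𝕜 h (x, a) (1, 0) :=
  (hh.hasFDerivAt.comp_hasDerivAt x ((hasDerivAt_id x).prodMk (hasDerivAt_const x a))).deriv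

lemma fderiv_prodMk_right (hh : DifferentiableAt 𝕜 h (x, a)) :
    fderiv 𝕜 (fun b => h (x, b)) a = fderiv 𝕜 h (x, a) ∘L .inr 𝕜 𝕜 E :=
  (hh.hasFDerivAt.comp a (hasFDerivAt_prodMk_right x a)).fderiv

end Slices

section PullbackForm

variable {𝕜 E F : Type*} [NontriviallyNormedField 𝕜] [NormedAddCommGroup E] [NormedSpace 𝕜 E]
  [NormedAddCommGroup F] [NormedSpace 𝕜 F]

lemma fderiv_smulRight_comp_symmetric (ℓ : E →L[𝕜] 𝕜) {ψ : 𝕜 → F} {a : E}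
    (hψ : DifferentiableAt 𝕜 ψ (ℓ a)) (u v : E) :
    fderiv 𝕜 (fun b => ℓ.smulRight (ψ (ℓ b))) a u v =
      fderiv 𝕜 (fun b => ℓ.smulRight (ψ (ℓ b))) a v u := by
  have hd : HasFDerivAt (fun b => ℓ.smulRight (ψ (ℓ b)))
      (ContinuousLinearMap.smulRightL 𝕜 E F ℓ ∘L .toSpanSingleton 𝕜 (deriv ψ (ℓ a)) ∘L ℓ) a :=
    (ContinuousLinearMap.smulRightL 𝕜 E F ℓ).hasFDerivAt.comp a
      (hψ.hasDerivAt.hasFDerivAt.comp a ℓ.hasFDerivAt)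
  rw [hd.fderiv]
  exact smul_comm _ _ _

/-- The pullbacks of the `1`-forms `f (x, y) dy` on `𝕜` along the linear functionals
`y = L x b`, as a family of `1`-forms in `b : E` depending on the parameter `x`. -/
noncomputable def pullbackForm (f : 𝕜 × 𝕜 → F) (L : 𝕜 → E →L[𝕜] 𝕜) (p : 𝕜 × E) : E →L[𝕜] F :=
  (L p.1).smulRight (f (p.1, L p.1 p.2))

variable {f : 𝕜 × 𝕜 → F} {L : 𝕜 → E →L[𝕜] 𝕜} {x : 𝕜}

lemma contDiffAt_pullbackForm {n : WithTop ℕ∞} {a : E} (hL : ContDiffAt 𝕜 n L x)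
    (hf : ContDiffAt 𝕜 n f (x, L x a)) : ContDiffAt 𝕜 n (pullbackForm f L) (x, a) := by
  have hL' : ContDiffAt 𝕜 n (fun p : 𝕜 × E => L p.1) (x, a) := hL.comp (x, a) contDiffAt_fst
  exact hL'.smulRight <| hf.comp (x, a) (contDiffAt_fst.prodMk (hL'.clm_apply contDiffAt_snd))

lemma eventually_fderiv_pullbackForm_symmetric {a : E} (hL : ContinuousAt L x)
    (hf : ContDiffAt 𝕜 1 f (x, L x a)) :
    ∀ᶠ y in 𝓝 x, ∀ u v, fderiv 𝕜 (fun b => pullbackForm f L (y, b)) a u v =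
      fderiv 𝕜 (fun b => pullbackForm f L (y, b)) a v u := by
  have graph_continuous : ContinuousAt (fun y => (y, L y a)) x :=
    continuousAt_id.prodMk (hL.clm_apply continuousAt_const)
  filter_upwards [graph_continuous.eventually (hf.eventually (by simp))] with y hy u v
  exact fderiv_smulRight_comp_symmetric (L y) (ψ := fun z => f (y, z))
    ((hy.differentiableAt one_ne_zero).comp _ (hasFDerivAt_prodMk_right y _).differentiableAt) u v

end PullbackForm

section CoeffEval

variable {𝕜 F : Type*} [NontriviallyNormedField 𝕜] [NormedAddCommGroup F] [NormedSpace 𝕜 F]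

/-- Evaluation at `x` of the polynomial with coefficients `a 0, …, a (d - 1)`, as a linear
functional of the coefficient vector `a`. -/
noncomputable def coeffEval (d : ℕ) (x : 𝕜) : (Fin d → 𝕜) →L[𝕜] 𝕜 :=
  ∑ l : Fin d, x ^ (l : ℕ) • ContinuousLinearMap.proj l

lemma coeffEval_apply (d : ℕ) (x : 𝕜) (a : Fin d → 𝕜) :
    coeffEval d x a = ∑ l : Fin d, a l * x ^ (l : ℕ) := by
  simp [coeffEval, mul_comm]

lemma coeffEval_single (d : ℕ) (x : 𝕜) (i : Fin d) :
    coeffEval d x (Pi.single i 1) = x ^ (i : ℕ) := by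
  simp [coeffEval_apply, Pi.single_apply]

lemma contDiff_coeffEval (d : ℕ) {n : WithTop ℕ∞} : ContDiff 𝕜 n (coeffEval d : 𝕜 → _) := by
  unfold coeffEval
  fun_prop

lemma taylorCoeff_pullbackForm_coeffEval_single [CharZero 𝕜] {f : 𝕜 × 𝕜 → F} {N d : ℕ}
    (hd : d ≤ N + 1) {a : Fin d → 𝕜} (hf : ContDiffAt 𝕜 N f (0, coeffEval d 0 a)) (i : Fin d) :
    (1 / (N ! : 𝕜)) • iteratedDeriv N (fun x => pullbackForm f (coeffEval d) (x, a)) 0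
        (Pi.single i 1) =
      (1 / ((N - i)! : 𝕜)) • iteratedDeriv (N - i) (fun x => f (x, coeffEval d x a)) 0 := by
  have hL : ContDiffAt 𝕜 N (coeffEval d : 𝕜 → _) 0 := (contDiff_coeffEval d).contDiffAt
  have hform : ContDiffAt 𝕜 N (fun x => pullbackForm f (coeffEval d) (x, a)) 0 :=
    (contDiffAt_pullbackForm hL hf).comp 0 (contDiffAt_id.prodMk contDiffAt_const)
  have hcurve : ContDiffAt 𝕜 N (fun x => f (x, coeffEval d x a)) 0 :=
    hf.comp 0 (contDiffAt_id.prodMk (hL.clm_apply contDiffAt_const))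
  have eval_single : iteratedDeriv N (fun x => pullbackForm f (coeffEval d) (x, a)) 0
      (Pi.single i 1) = iteratedDeriv N (fun x => x ^ (i : ℕ) • f (x, coeffEval d x a)) 0 := by
    rw [iteratedDeriv_clm_apply_const hform]
    simp only [pullbackForm, ContinuousLinearMap.smulRight_apply, coeffEval_single]
  rw [eval_single, taylorCoeff_pow_smul_zero (by lia) hcurve]

end CoeffEval

section MixedDerivatives

variable {𝕜 E F : Type*} [RCLike 𝕜] [NormedAddCommGroup E] [NormedSpace 𝕜 E]
  [NormedAddCommGroup F] [NormedSpace 𝕜 F] {h : 𝕜 × E → F} {x : 𝕜} {a : E}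

lemma fderiv_fderiv_apply_eq_deriv_fderiv (hh : ContDiffAt 𝕜 2 h (x, a)) :
    fderiv 𝕜 (fun b => fderiv 𝕜 h (x, b) (1, 0)) a =
      deriv (fun y => fderiv 𝕜 (fun b => h (y, b)) a) x := by
  have hD : HasFDerivAt (fderiv 𝕜 h) (fderiv 𝕜 (fderiv 𝕜 h) (x, a)) (x, a) :=
    ((hh.fderiv_right (m := 1) (by norm_num)).differentiableAt one_ne_zero).hasFDerivAt
  have left : HasFDerivAt (fun b => fderiv 𝕜 h (x, b) (1, 0))
      (.apply 𝕜 F (1, 0) ∘L fderiv 𝕜 (fderiv 𝕜 h) (x, a) ∘L .inr 𝕜 𝕜 E) a :=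
    (ContinuousLinearMap.apply 𝕜 F ((1, 0) : 𝕜 × E)).hasFDerivAt.comp a
      (hD.comp a (hasFDerivAt_prodMk_right x a))
  have line : HasDerivAt (fun y => fderiv 𝕜 h (y, a)) (fderiv 𝕜 (fderiv 𝕜 h) (x, a) (1, 0)) x :=
    hD.comp_hasDerivAt x ((hasDerivAt_id x).prodMk (hasDerivAt_const x a))
  have right : HasDerivAt (fun y => fderiv 𝕜 h (y, a) ∘L .inr 𝕜 𝕜 E)
      (fderiv 𝕜 (fderiv 𝕜 h) (x, a) (1, 0) ∘L .inr 𝕜 𝕜 E) x :=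
    ((ContinuousLinearMap.compL 𝕜 E (𝕜 × E) F).flip (.inr 𝕜 𝕜 E)).hasFDerivAt.comp_hasDerivAt x line
  have slices : (fun y => fderiv 𝕜 (fun b => h (y, b)) a) =ᶠ[𝓝 x]
      fun y => fderiv 𝕜 h (y, a) ∘L .inr 𝕜 𝕜 E := by
    have near : ∀ᶠ y in 𝓝 x, ContDiffAt 𝕜 2 h (y, a) :=
      (Continuous.prodMk_left a).continuousAt.eventually (hh.eventually (by simp))
    filter_upwards [near] with y hy using fderiv_prodMk_right (hy.differentiableAt two_ne_zero)
  rw [left.fderiv, slices.deriv_eq, right.deriv]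
  ext v
  exact hh.isSymmSndFDerivAt (by simp) (0, v) (1, 0)

lemma hasFDerivAt_iteratedDeriv_prodMk {k : ℕ} (hh : ContDiffAt 𝕜 (k + 1) h (x, a)) :
    HasFDerivAt (fun b => iteratedDeriv k (fun y => h (y, b)) x)
      (iteratedDeriv k (fun y => fderiv 𝕜 (fun b => h (y, b)) a) x) a := by
  induction k generalizing h with
  | zero =>
    simp only [iteratedDeriv_zero]
    exact ((hh.differentiableAt (by simp)).comp a
      (hasFDerivAt_prodMk_right x a).differentiableAt).hasFDerivAt
  | succ k ih =>
    have near : ∀ᶠ p in 𝓝 (x, a), ContDiffAt 𝕜 ((k + 1 : ℕ) + 1) h p := hh.eventually (by simp)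
    have iterate_slice : (fun b => iteratedDeriv (k + 1) (fun y => h (y, b)) x) =ᶠ[𝓝 a]
        fun b => iteratedDeriv k (fun y => fderiv 𝕜 h (y, b) (1, 0)) x := by
      filter_upwards [(Continuous.prodMk_right x).continuousAt.eventually near.eventually_nhds]
        with b hb
      rw [iteratedDeriv_succ']
      refine EventuallyEq.iteratedDeriv_eq k ?_
      filter_upwards [(Continuous.prodMk_left b).continuousAt.eventually hb] with y hy
      exact deriv_prodMk_left (hy.differentiableAt (by simp))
    have swap : (fun y => fderiv 𝕜 (fun b => fderiv 𝕜 h (y, b) (1, 0)) a) =ᶠ[𝓝 x]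
        deriv fun y => fderiv 𝕜 (fun b => h (y, b)) a := by
      filter_upwards [(Continuous.prodMk_left a).continuousAt.eventually near] with y hy
      exact fderiv_fderiv_apply_eq_deriv_fderiv (hy.of_le (by norm_cast; lia))
    rw [iteratedDeriv_succ', ← swap.iteratedDeriv_eq k]
    have hD : ContDiffAt 𝕜 (k + 1) (fun p => fderiv 𝕜 h p (1, 0)) (x, a) :=
      (hh.fderiv_right (by simp)).clm_apply contDiffAt_const
    exact (ih hD).congr_of_eventuallyEq iterate_slice

end MixedDerivatives

section ClosedForms

variable {𝕜 E F : Type*} [RCLike 𝕜] [NormedAddCommGroup E] [NormedSpace 𝕜 E]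
  [NormedAddCommGroup F] [NormedSpace 𝕜 F]

lemma exists_hasFDerivAt_of_fderiv_symmetric [NormedSpace ℝ E] [IsScalarTower ℝ 𝕜 E]
    [CompleteSpace F] {s : Set E} {ω : E → E →L[𝕜] F} (hs : Convex ℝ s) (hso : IsOpen s)
    (hω : DifferentiableOn 𝕜 ω s)
    (hdω : ∀ a ∈ s, ∀ u v, fderiv 𝕜 ω a u v = fderiv 𝕜 ω a v u) :
    ∃ W : E → F, ∀ a ∈ s, HasFDerivAt W (ω a) a := by
  let _ : NormedSpace ℝ F := .restrictScalars ℝ 𝕜 F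
  have hd : ∀ a ∈ s, HasFDerivAt ω ((fderiv 𝕜 ω a).restrictScalars ℝ) a := fun a ha =>
    (hω.differentiableAt (hso.mem_nhds ha)).hasFDerivAt.restrictScalars ℝ
  refine hs.exists_forall_hasFDerivAt_of_fderiv_symmetric hso
    (fun a ha => (hd a ha).differentiableAt.differentiableWithinAt) fun a ha u v => ?_
  rw [(hd a ha).fderiv]
  exact hdω a ha u v

lemma fderiv_iteratedDeriv_symmetric {Ω : 𝕜 × E → E →L[𝕜] F} {x : 𝕜} {a : E} {k : ℕ}
    (hΩ : ContDiffAt 𝕜 (k + 1) Ω (x, a))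
    (hdΩ : ∀ᶠ y in 𝓝 x, ∀ u v, fderiv 𝕜 (fun b => Ω (y, b)) a u v =
      fderiv 𝕜 (fun b => Ω (y, b)) a v u) (u v : E) :
    fderiv 𝕜 (fun b => iteratedDeriv k (fun y => Ω (y, b)) x) a u v =
      fderiv 𝕜 (fun b => iteratedDeriv k (fun y => Ω (y, b)) x) a v u := by
  have hDΩ : ContDiffAt 𝕜 k (fun y => fderiv 𝕜 (fun b => Ω (y, b)) a) x :=
    ContDiffAt.fderiv (f := fun y b => Ω (y, b)) hΩ contDiffAt_const le_rfl
  have eval_comm (u v : E) : iteratedDeriv k (fun y => fderiv 𝕜 (fun b => Ω (y, b)) a) x u v =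
      iteratedDeriv k (fun y => fderiv 𝕜 (fun b => Ω (y, b)) a u v) x := by
    rw [iteratedDeriv_clm_apply_const hDΩ, iteratedDeriv_clm_apply_const (by fun_prop)]
  rw [(hasFDerivAt_iteratedDeriv_prodMk hΩ).fderiv, eval_comm, eval_comm]
  exact EventuallyEq.iteratedDeriv_eq k (hdΩ.mono fun y hy => hy u v)

lemma exists_hasFDerivAt_iteratedDeriv_pullbackForm [NormedSpace ℝ E] [IsScalarTower ℝ 𝕜 E]
    [CompleteSpace F] {f : 𝕜 × 𝕜 → F} {L : 𝕜 → E →L[𝕜] 𝕜} {x : 𝕜} {s : Set E} {k : ℕ}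
    (hs : Convex ℝ s) (hso : IsOpen s)
    (hL : ContDiffAt 𝕜 (k + 1) L x) (hf : ∀ a ∈ s, ContDiffAt 𝕜 (k + 1) f (x, L x a)) :
    ∃ W : E → F, ∀ a ∈ s,
      HasFDerivAt W (iteratedDeriv k (fun y => pullbackForm f L (y, a)) x) a := by
  have hΩ : ∀ a ∈ s, ContDiffAt 𝕜 (k + 1) (pullbackForm f L) (x, a) := fun a ha =>
    contDiffAt_pullbackForm hL (hf a ha)
  refine exists_hasFDerivAt_of_fderiv_symmetric hs hso
    (fun a ha =>
      (hasFDerivAt_iteratedDeriv_prodMk (hΩ a ha)).differentiableAt.differentiableWithinAt)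
    fun a ha => fderiv_iteratedDeriv_symmetric (hΩ a ha) ?_
  exact eventually_fderiv_pullbackForm_symmetric hL.continuousAt ((hf a ha).of_le (by simp))

end ClosedForms

section Superpotential

variable {𝕜 F : Type*} [RCLike 𝕜] [NormedAddCommGroup F] [NormedSpace 𝕜 F]

theorem exists_superpotential_analytic_general [CompleteSpace F] (N d : ℕ) (hd : d ≤ N + 1)
    (f : 𝕜 × 𝕜 → F) (hf : ContDiffAt 𝕜 (N + 1) f (0, 0))
    (g : 𝕜 → (Fin d → 𝕜) → F)
    (hg : ∀ x a, g x a = f (x, ∑ l : Fin d, a l * x ^ (l : ℕ)))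
    (k : ℕ → (Fin d → 𝕜) → F)
    (hk : ∀ i a, k i a = -((1 / (i ! : 𝕜)) • iteratedDeriv i (fun x => g x a) 0)) :
    ∃ U : Set (Fin d → 𝕜), IsOpen U ∧ (0 : Fin d → 𝕜) ∈ U ∧
      ∃ W : (Fin d → 𝕜) → F, DifferentiableOn 𝕜 W U ∧
        ∀ i : Fin d, ∀ a ∈ U, fderiv 𝕜 W a (Pi.single i 1) = k (N - i) a := by
  have smooth_near : ∀ᶠ a in 𝓝 (0 : Fin d → 𝕜),
      ContDiffAt 𝕜 (N + 1) f (0, coeffEval d 0 a) := by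
    have base_continuous : Continuous fun a : Fin d → 𝕜 => ((0 : 𝕜), coeffEval d 0 a) := by fun_prop
    refine base_continuous.continuousAt.eventually ?_
    simpa only [map_zero] using hf.eventually (by simp)
  obtain ⟨r, hr, hfr⟩ := Metric.eventually_nhds_iff_ball.1 smooth_near
  obtain ⟨V, hV⟩ := exists_hasFDerivAt_iteratedDeriv_pullbackForm (convex_ball 0 r)
    Metric.isOpen_ball (contDiff_coeffEval d).contDiffAt hfr
  have hW := fun a ha => ((hV a ha).const_smul (1 / (N ! : 𝕜))).neg
  refine ⟨Metric.ball 0 r, Metric.isOpen_ball, Metric.mem_ball_self hr, _,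
    fun a ha => (hW a ha).differentiableAt.differentiableWithinAt, fun i a ha => ?_⟩
  rw [(hW a ha).fderiv, hk]
  simp only [hg, ← coeffEval_apply]
  exact congr(-$(taylorCoeff_pullbackForm_coeffEval_single hd ((hfr a ha).of_le (by simp)) i))

end Superpotential

/-- Let `n ≥ 2`, `m = n − 2`, and let `f : ℂ × ℂ → ℂ` be analytic near
`(0,0)`.  For `(x, a)` near `0` in `ℂ × ℂ^{m+1}` set `g(x, a) := f(x, ∑_{l=0}^m a_l x^l)`, and
for `i ≥ 0` set `k_i(a) := −(1/i!) · (∂^i g/∂x^i)(0, a)`.  Then there are an open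
neighborhood `U` of `0` in `ℂ^{m+1}` and a holomorphic `W : U → ℂ` such that
`∂W/∂a_i = k_{n−1−i}` on `U` for all `0 ≤ i ≤ m`. -/
theorem exists_superpotential_analytic (n m : ℕ) (hn : 2 ≤ n) (hm : m = n - 2)
    (f : ℂ × ℂ → ℂ) (hf : AnalyticAt ℂ f (0, 0))
    (g : ℂ → (Fin (m + 1) → ℂ) → ℂ)
    (hg : ∀ x a, g x a = f (x, ∑ l : Fin (m + 1), a l * x ^ (l : ℕ)))
    (k : ℕ → (Fin (m + 1) → ℂ) → ℂ)
    (hk : ∀ i a, k i a = -((1 / (i.factorial : ℂ)) * iteratedDeriv i (fun x => g x a) 0)) :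
    ∃ U : Set (Fin (m + 1) → ℂ), IsOpen U ∧ (0 : Fin (m + 1) → ℂ) ∈ U ∧
      ∃ W : (Fin (m + 1) → ℂ) → ℂ, DifferentiableOn ℂ W U ∧
        ∀ i : Fin (m + 1), ∀ a ∈ U,
          fderiv ℂ W a (Pi.single i 1) = k (n - 1 - (i : ℕ)) a :=
  exists_superpotential_analytic_general (n - 1) (m + 1) (by lia) f hf.contDiffAt g hg k hk
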